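/- Corollary on the once-truncated symmetric continued fraction: let s ≥ 2, let q_1, …, q_s be positive integers, let r_1, …, r_{2s+2} be the associated remainder sequence of the symmetric Euclidean scheme with n = r_1 and a = r_2, and let n' = r'_1 and a' = r'_2 be the first two remainders of the symmetric Euclidean scheme associated to (q_2, …, q_s) (so n'/a' is the reduced fraction [q_2, …, q_s, q_s, …, q_2]). Then n·n' = a² + 1 (so n' = (a²+1)/n), and a' = a − q_1·n', which is the remainder when a is divided by n'. -/

import Mathlib

/-- Auxiliary for continuants: `contAux u i n` is the continuant `𝔠_{i, i+n-1}` of the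
sequence `u`, computed via the recurrence `𝔠_{i,j} = u j * 𝔠_{i,j-1} + 𝔠_{i,j-2}`. -/
def contAux (u : ℤ → ℤ) (i : ℤ) : ℕ → ℤ
  | 0 => 1
  | 1 => u i
  | n + 2 => u (i + n + 1) * contAux u i (n + 1) + contAux u i n

/-- `cont u i j` is the continuant `𝔠_{i,j}` of the sequence `u`, with the boundary
conventions `𝔠_{j+1,j} = 1` and `𝔠_{i,j} = 0` for `i > j + 1` (in particular
`𝔠_{j+2,j} = 0`), and the recurrence `𝔠_{i,j} = u j * 𝔠_{i,j-1} + 𝔠_{i,j-2}`. -/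
def cont (u : ℤ → ℤ) (i j : ℤ) : ℤ :=
  if j + 1 < i then 0 else contAux u i (j + 1 - i).toNat

/-- The symmetric doubling of `(q_1, …, q_s)`:
`(Q_1, …, Q_{2s}) = (q_1, …, q_s, q_s, …, q_1)`. -/
def symQuot (q : ℤ → ℤ) (s : ℕ) (k : ℤ) : ℤ :=
  if k ≤ (s : ℤ) then q k else q (2 * (s : ℤ) + 1 - k)

/-- Auxiliary: `symAux q s m` is the remainder `r_{2s+2-m}` of the symmetric
Euclidean scheme attached to `(q_1, …, q_s)`. -/
def symAux (q : ℤ → ℤ) (s : ℕ) : ℕ → ℤ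
  | 0 => 0
  | 1 => 1
  | m + 2 => symQuot q s (2 * (s : ℤ) - (m : ℤ)) * symAux q s (m + 1) + symAux q s m

/-- `symRem q s k` is the remainder `r_k` of the symmetric Euclidean scheme attached to
`(q_1, …, q_s)`: with `(Q_1, …, Q_{2s}) = (q_1, …, q_s, q_s, …, q_1)`, one has
`r_{2s+2} = 0`, `r_{2s+1} = 1`, and `r_k = Q_k * r_{k+1} + r_{k+2}` for `1 ≤ k ≤ 2s`. -/
def symRem (q : ℤ → ℤ) (s : ℕ) (k : ℤ) : ℤ :=
  symAux q s (2 * (s : ℤ) + 2 - k).toNat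

/-- Second solution of the recurrence of `symAux`, with initial values `1, 0`. -/
def symAuxB (q : ℤ → ℤ) (s : ℕ) : ℕ → ℤ
  | 0 => 1
  | 1 => 0
  | m + 2 => symQuot q s (2 * (s : ℤ) - (m : ℤ)) * symAuxB q s (m + 1) + symAuxB q s m

lemma symQuot_shift (q : ℤ → ℤ) (s m : ℕ) :
    symQuot q (s + 1) (2 * ((s + 1 : ℕ) : ℤ) - ((m + 1 : ℕ) : ℤ))
      = symQuot (fun k => q (k + 1)) s (2 * (s : ℤ) - (m : ℤ)) := by
  unfold symQuot
  push_cast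
  by_cases h : 2 * (s : ℤ) - m ≤ s
  · rw [if_pos h, if_pos (by omega)]
    congr 1; ring
  · rw [if_neg h, if_neg (by omega)]
    congr 1; ring

lemma symAux_shift (q : ℤ → ℤ) (s m : ℕ) :
    symAux q (s + 1) (m + 1) = q 1 * symAux (fun k => q (k + 1)) s m
      + symAuxB (fun k => q (k + 1)) s m := by
  induction m using Nat.twoStepInduction with
  | zero => simp [symAux, symAuxB]
  | one =>
    simp only [symAux, symAuxB, symQuot]
    rw [if_neg (by push_cast; omega)]
    push_cast
    ring_nf
  | more m h1 h2 =>
    rw [symAux, symQuot_shift, h1, h2, symAux, symAuxB]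
    ring

lemma symAuxB_shift (q : ℤ → ℤ) (s m : ℕ) :
    symAuxB q (s + 1) (m + 1) = symAux (fun k => q (k + 1)) s m := by
  induction m using Nat.twoStepInduction with
  | zero => simp [symAux, symAuxB]
  | one => simp [symAux, symAuxB]
  | more m h1 h2 => rw [symAuxB, symQuot_shift, h1, h2, symAux]

lemma symAux_det (q : ℤ → ℤ) (s m : ℕ) :
    symAux q s (m + 1) * symAuxB q s m - symAux q s m * symAuxB q s (m + 1) = (-1) ^ m := by
  induction m with
  | zero => simp [symAux, symAuxB]
  | succ m ih =>
    rw [symAux, symAuxB, pow_succ, ← ih]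
    ring

lemma symAux_last (q : ℤ → ℤ) (s : ℕ) :
    symAux q s (2 * s + 2) = q 0 * symAux q s (2 * s + 1) + symAux q s (2 * s) := by
  rw [symAux]
  congr 2
  simp [symQuot]

lemma symAux_symm (s : ℕ) : ∀ q : ℤ → ℤ, symAux q s (2 * s) = symAuxB q s (2 * s + 1) := by
  induction s with
  | zero => intro q; simp [symAux, symAuxB]
  | succ s ih =>
    intro q
    rw [symAuxB_shift, show 2 * (s + 1) = 2 * s + 1 + 1 by ring, symAux_shift, ← ih,
      symAux_last]
    simp

lemma symQuot_pos (q : ℤ → ℤ) (s m : ℕ) (hq : ∀ k : ℤ, 1 ≤ k → k ≤ (s : ℤ) → 0 < q k)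
    (hm : m < 2 * s) : 0 < symQuot q s (2 * (s : ℤ) - (m : ℤ)) := by
  unfold symQuot
  split_ifs with h
  · exact hq _ (by omega) h
  · exact hq _ (by omega) (by omega)

lemma symAux_pos (q : ℤ → ℤ) (s m : ℕ) (hq : ∀ k : ℤ, 1 ≤ k → k ≤ (s : ℤ) → 0 < q k)
    (hm : m ≤ 2 * s) : 0 ≤ symAux q s m ∧ 0 < symAux q s (m + 1) := by
  induction m with
  | zero => simp [symAux]
  | succ m ih =>
    obtain ⟨h1, h2⟩ := ih (by omega)
    have := symQuot_pos q s m hq (by omega)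
    refine ⟨h2.le, ?_⟩
    rw [symAux]
    positivity

theorem once_truncated_symmetric_scheme
    (s : ℕ) (hs : 2 ≤ s) (q : ℤ → ℤ) (hq : ∀ k : ℤ, 1 ≤ k → k ≤ (s : ℤ) → 0 < q k) :
    symRem q s 1 * symRem (fun k => q (k + 1)) (s - 1) 1 = symRem q s 2 ^ 2 + 1 ∧
      symRem (fun k => q (k + 1)) (s - 1) 2 =
        symRem q s 2 - q 1 * symRem (fun k => q (k + 1)) (s - 1) 1 ∧
      symRem (fun k => q (k + 1)) (s - 1) 2 =
        symRem q s 2 % symRem (fun k => q (k + 1)) (s - 1) 1 := by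
  obtain ⟨t, rfl⟩ : ∃ t, s = t + 2 := ⟨s - 2, by omega⟩
  have e1 : ∀ (p : ℤ → ℤ) (u : ℕ), symRem p u 1 = symAux p u (2 * u + 1) := by
    intro p u; unfold symRem; congr 1; omega
  have e2 : ∀ (p : ℤ → ℤ) (u : ℕ), symRem p u 2 = symAux p u (2 * u) := by
    intro p u; unfold symRem; congr 1; omega
  rw [show t + 2 - 1 = t + 1 by omega]
  simp only [e1, e2]
  have hd := symAux_det q (t + 2) (2 * (t + 2))
  rw [← symAux_symm, pow_mul] at hd
  have hB : symAuxB q (t + 2) (2 * (t + 2))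
      = symAux (fun k => q (k + 1)) (t + 1) (2 * (t + 1) + 1) :=
    symAuxB_shift q (t + 1) (2 * (t + 1) + 1)
  rw [hB] at hd
  have hA : symAux q (t + 2) (2 * (t + 2)) = q 1 *
      symAux (fun k => q (k + 1)) (t + 1) (2 * (t + 1) + 1)
      + symAux (fun k => q (k + 1)) (t + 1) (2 * (t + 1)) := by
    rw [symAux_symm (t + 1)]
    exact symAux_shift q (t + 1) (2 * (t + 1) + 1)
  have hq' : ∀ k : ℤ, 1 ≤ k → k ≤ ((t + 1 : ℕ) : ℤ) → 0 < (fun k => q (k + 1)) k := by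
    intro k h1 h2
    exact hq _ (by omega) (by push_cast at h2 ⊢; omega)
  have hp := symAux_pos (fun k => q (k + 1)) (t + 1) (2 * t + 1) hq' (by omega)
  have hp0 := symAux_pos (fun k => q (k + 1)) (t + 1) (2 * t) hq' (by omega)
  have hQ := symQuot_pos (fun k => q (k + 1)) (t + 1) (2 * t + 1) hq' (by omega)
  have hlt : symAux (fun k => q (k + 1)) (t + 1) (2 * (t + 1))
      < symAux (fun k => q (k + 1)) (t + 1) (2 * (t + 1) + 1) := by
    have h3 : symAux (fun k => q (k + 1)) (t + 1) (2 * (t + 1) + 1) = _ :=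
      symAux.eq_3 (fun k => q (k + 1)) (t + 1) (2 * t + 1)
    rw [h3, show 2 * (t + 1) = 2 * t + 1 + 1 by ring]
    nlinarith [hp.2, hp0.2]
  have hnn : 0 ≤ symAux (fun k => q (k + 1)) (t + 1) (2 * (t + 1)) := hp.2.le
  refine ⟨by linear_combination hd, by rw [hA]; ring, ?_⟩
  rw [hA, Int.mul_add_emod_self_right, Int.emod_eq_of_lt hnn hlt]
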